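/- Any restricted integer Cauchy matrix is nonsingular: if A = (a_1,...,a_n) is a strictly decreasing integer sequence and B = (b_1,...,b_n) a strictly increasing integer sequence with a_i > b_{n+1-i} and a_i ≠ b_j for all i,j, then the matrix with entries 1/(a_i - b_j) when a_i > b_j and 0 when a_i < b_j has nonzero determinant. -/

import Mathlib

/-!
The proof determines the sign of the determinant, for rational (not only integer) sequences.
Call a pair `(i, j)` *active* if `b j < a i`, and let `N` be the number of active pairs. Then
`(-1) ^ (n + N) * det > 0` (`signed_det_pos`), by strong induction on the size `n`.

* If the last pair `(n - 1, n - 1)` is active, so are all pairs, and the matrix is a genuine Cauchy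
  matrix. Eliminating the first column leaves a Cauchy matrix of size `n - 1` with rows and columns
  rescaled by positive factors, so the determinant is positive (`cauchy_det_pos`).
* Otherwise the three other corner pairs are active. In the Desnanot–Jacobi identity
  `det M * det M_inner = det M₁₁ * det Mₙₙ - det M₁ₙ * det Mₙ₁` (`desnanot_jacobi`), where
  the indices name the deleted row and column and `M_inner` lacks both outer rows and columns, all
  minors are again of the same kind. Three of the four corners being active is exactly what makes the expected
  signs of `det M₁₁ * det Mₙₙ` and `- det M₁ₙ * det Mₙ₁` agree with that of `det M * det M_inner`.
  The minors `M_inner`, `Mₙₙ`, `M₁ₙ`, `Mₙ₁` inherit the hypothesis on the antidiagonal. `M₁₁` may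
  fail it, but then it contains a zero block large enough to force `det M₁₁ = 0`
  (`det_eq_zero_of_antidiag`). So nothing cancels and `det M ≠ 0`.
-/

/-! ### The Desnanot–Jacobi identity -/

/-- Jacobi's identity for `2 × 2` minors of the adjugate, under the assumption that `det A` can be
cancelled. It comes from computing the determinant of `A * X`, where `X` is the identity matrix with
columns `p` and `q` replaced by those of the adjugate. -/
lemma adjugate_minor_of_ne_zero {m R : Type*} [Fintype m] [DecidableEq m] [CommRing R] [IsDomain R]
    (A : Matrix m m R) (hA : A.det ≠ 0) {p q : m} (hpq : p ≠ q) :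
    A.adjugate p p * A.adjugate q q - A.adjugate p q * A.adjugate q p =
      A.det * ((A.updateCol p (Pi.single p 1)).updateCol q (Pi.single q 1)).det := by
  let U : Matrix m (Fin 2) R := Matrix.of fun i k =>
    if k = 0 then A.adjugate i p - (1 : Matrix m m R) i p
    else A.adjugate i q - (1 : Matrix m m R) i q
  let V : Matrix (Fin 2) m R := Matrix.of fun k j =>
    if k = 0 then (1 : Matrix m m R) p j else (1 : Matrix m m R) q j
  have hX : (1 + U * V).det =
      A.adjugate p p * A.adjugate q q - A.adjugate p q * A.adjugate q p := by
    rw [Matrix.det_one_add_mul_comm, Matrix.det_fin_two]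
    simp [U, V, Matrix.mul_apply, Matrix.one_apply, hpq, hpq.symm]
  have hAX : A * (1 + U * V) =
      (A.updateCol p (A.det • Pi.single p 1)).updateCol q (A.det • Pi.single q 1) := by
    have hadj := A.mul_adjugate
    have hAU : ∀ i, (A * U) i 0 = A.det * (1 : Matrix m m R) i p - A i p ∧
        (A * U) i 1 = A.det * (1 : Matrix m m R) i q - A i q := by
      intro i
      have h1 := congrFun (congrFun hadj i) p
      have h2 := congrFun (congrFun hadj i) q
      have h3 := congrFun (congrFun (mul_one A) i) p
      have h4 := congrFun (congrFun (mul_one A) i) q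
      rw [Matrix.mul_apply] at h1 h2 h3 h4
      simp only [Matrix.smul_apply, smul_eq_mul] at h1 h2
      constructor
      · simp only [U, Matrix.mul_apply, Matrix.of_apply, if_true, mul_sub,
          Finset.sum_sub_distrib, h1, h3]
      · simp only [U, Matrix.mul_apply, Matrix.of_apply, one_ne_zero, if_false, mul_sub,
          Finset.sum_sub_distrib, h2, h4]
    ext i j
    rw [mul_add, mul_one, ← Matrix.mul_assoc, Matrix.add_apply, Matrix.mul_apply,
      Fin.sum_univ_two, (hAU i).1, (hAU i).2]
    by_cases hq : j = q
    · subst hq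
      simp [V, Matrix.one_apply, hpq, Pi.single_apply]
    · by_cases hp : j = p
      · subst hp
        simp [V, Matrix.one_apply, hpq, hpq.symm, Pi.single_apply]
      · simp [V, Matrix.one_apply, hp, hq, Ne.symm hp, Ne.symm hq]
  have h := congrArg Matrix.det hAX
  rw [Matrix.det_mul, hX, Matrix.det_updateCol_smul, Matrix.updateCol_comm _ hpq,
    Matrix.det_updateCol_smul, Matrix.updateCol_comm _ hpq.symm] at h
  exact mul_left_cancel₀ hA h

/-- The Desnanot–Jacobi identity when `det A` can be cancelled. -/
lemma desnanot_jacobi_of_ne_zero {R : Type*} [CommRing R] [IsDomain R] {n : ℕ}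
    (A : Matrix (Fin (n + 2)) (Fin (n + 2)) R) (hA : A.det ≠ 0) :
    A.det * (A.submatrix (fun i : Fin n => i.succ.castSucc) (fun i => i.succ.castSucc)).det =
      (A.submatrix Fin.succ Fin.succ).det * (A.submatrix Fin.castSucc Fin.castSucc).det -
      (A.submatrix Fin.succ Fin.castSucc).det * (A.submatrix Fin.castSucc Fin.succ).det := by
  have h := adjugate_minor_of_ne_zero A hA (p := 0) (q := Fin.last (n + 1)) (by simp [Fin.ext_iff])
  have hin : ((A.updateCol 0 (Pi.single 0 1)).updateCol (Fin.last (n + 1))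
      (Pi.single (Fin.last (n + 1)) 1)).det =
      (A.submatrix (fun i : Fin n => i.succ.castSucc) (fun i => i.succ.castSucc)).det := by
    rw [Matrix.det_succ_column _ (Fin.last (n + 1)), Finset.sum_eq_single (Fin.last (n + 1))]
    · rw [Matrix.det_succ_column_zero, Finset.sum_eq_single 0]
      · simp only [Matrix.updateCol_self, Pi.single_eq_same, Fin.succAbove_last,
          Fin.succAbove_zero, Matrix.submatrix_apply, Matrix.submatrix_submatrix, Fin.castSucc_zero]
        rw [Matrix.updateCol_ne (by simp [Fin.ext_iff]), Matrix.updateCol_self, Even.neg_one_pow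
          (by simp)]
        simp only [Pi.single_eq_same, Fin.val_zero, pow_zero, one_mul]
        congr 1
        ext i j
        simp only [Matrix.submatrix_apply, Function.comp_apply]
        rw [Matrix.updateCol_ne (by exact Fin.castSucc_ne_last _),
          Matrix.updateCol_ne (by exact fun h => absurd (congrArg Fin.val h) (Nat.succ_ne_zero _))]
      · intro b _ hb
        simp only [Fin.succAbove_last, Matrix.submatrix_apply, Fin.castSucc_zero]
        rw [Matrix.updateCol_ne (by simp [Fin.ext_iff]), Matrix.updateCol_self,
          Pi.single_eq_of_ne (by exact fun h => hb (Fin.castSucc_injective _ h))]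
        simp
      · simp
    · intro b _ hb
      rw [Matrix.updateCol_self, Pi.single_eq_of_ne hb]
      simp
    · simp
  rw [hin] at h
  rw [← h]
  simp only [Matrix.adjugate_fin_succ_eq_det_submatrix, Fin.succAbove_last, Fin.succAbove_zero,
    Fin.val_zero, Fin.val_last, add_zero, zero_add, pow_zero, one_mul]
  have h1 : ((-1 : R) ^ (n + 1)) * (-1) ^ (n + 1) = 1 := by rw [← pow_add]; simp
  change (A.submatrix Fin.succ Fin.succ).det * _ - _ = _
  linear_combination ((A.submatrix Fin.succ Fin.succ).det *
      (A.submatrix Fin.castSucc Fin.castSucc).det -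
      (A.submatrix Fin.succ Fin.castSucc).det * (A.submatrix Fin.castSucc Fin.succ).det) * h1

/-- The Desnanot–Jacobi identity (Dodgson condensation). It is a polynomial identity in the entries,
so it suffices to check it for the generic matrix, whose determinant is nonzero. -/
lemma desnanot_jacobi {R : Type*} [CommRing R] {n : ℕ}
    (A : Matrix (Fin (n + 2)) (Fin (n + 2)) R) :
    A.det * (A.submatrix (fun i : Fin n => i.succ.castSucc) (fun i => i.succ.castSucc)).det =
      (A.submatrix Fin.succ Fin.succ).det * (A.submatrix Fin.castSucc Fin.castSucc).det -
      (A.submatrix Fin.succ Fin.castSucc).det * (A.submatrix Fin.castSucc Fin.succ).det := by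
  have h := desnanot_jacobi_of_ne_zero (Matrix.mvPolynomialX (Fin (n + 2)) (Fin (n + 2)) ℤ)
    (Matrix.det_mvPolynomialX_ne_zero _ ℤ)
  have h2 := congrArg (MvPolynomial.aeval fun p : Fin (n + 2) × Fin (n + 2) => A p.1 p.2) h
  simp only [map_mul, map_sub, AlgHom.map_det, AlgHom.mapMatrix_apply,
    ← Matrix.submatrix_map] at h2
  have hX := Matrix.mvPolynomialX_mapMatrix_aeval ℤ A
  rw [AlgHom.mapMatrix_apply] at hX
  rwa [hX] at h2

/-! ### Restricted Cauchy matrices -/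

/-- The restricted Cauchy matrix of two rational sequences. -/
def restrictedCauchy {n : ℕ} (a b : Fin n → ℚ) : Matrix (Fin n) (Fin n) ℚ :=
  Matrix.of fun i j => if b j < a i then (a i - b j)⁻¹ else 0

/-- The sign `(-1) ^ (n + N)`, where `N` is the number of pairs `(i, j)` with `b j < a i`. -/
def expectedSign {n : ℕ} (a b : Fin n → ℚ) : ℚ :=
  (-1) ^ n * ∏ i, ∏ j, if b j < a i then -1 else 1

lemma expectedSign_sq {n : ℕ} (a b : Fin n → ℚ) : expectedSign a b ^ 2 = 1 := by
  unfold expectedSign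
  rw [mul_pow, ← pow_mul, mul_comm n 2, pow_mul, ← Finset.prod_pow]
  simp [← Finset.prod_pow, ite_pow]

/-- If the antidiagonal condition fails at `i`, all entries in rows `≥ i` and columns `≥ i.rev`
vanish. This zero block is too large for a nonzero determinant. -/
lemma det_eq_zero_of_antidiag {n : ℕ} (a b : Fin n → ℚ) (ha : StrictAnti a) (hb : StrictMono b)
    (i : Fin n) (hi : a i ≤ b i.rev) : (restrictedCauchy a b).det = 0 := by
  rw [← Matrix.det_transpose, Matrix.det_apply]
  refine Finset.sum_eq_zero fun σ _ => ?_
  have : ∃ k, i ≤ k ∧ i.rev ≤ σ k := by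
    by_contra! hcon
    have hsub : (Finset.Ici i).map σ.toEmbedding ⊆ Finset.Iio i.rev := by
      intro x hx
      obtain ⟨k, hk, rfl⟩ := Finset.mem_map.1 hx
      exact Finset.mem_Iio.2 (hcon k (Finset.mem_Ici.1 hk))
    have hc := Finset.card_le_card hsub
    rw [Finset.card_map, Fin.card_Ici, Fin.card_Iio, Fin.val_rev] at hc
    omega
  obtain ⟨k, hk, hσ⟩ := this
  rw [Finset.prod_eq_zero (Finset.mem_univ k), smul_zero]
  have h1 := ha.antitone hk
  have h2 := hb.monotone hσ
  simp only [restrictedCauchy, Matrix.transpose_apply, Matrix.of_apply]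
  rw [if_neg (by linarith)]

/-- A Cauchy matrix with positive entries, rows indexed by a decreasing and columns by an increasing
sequence, has positive determinant. -/
lemma cauchy_det_pos : ∀ {n : ℕ} (a b : Fin n → ℚ), StrictAnti a → StrictMono b →
    (∀ i j, b j < a i) → 0 < (Matrix.of fun i j => (a i - b j)⁻¹).det
  | 0, _, _, _, _, _ => by simp
  | n + 1, a, b, ha, hb, h => by
    have ih := cauchy_det_pos (fun i => a i.succ) (fun j => b j.succ)
      (ha.comp_strictMono (Fin.strictMono_succ)) (hb.comp (Fin.strictMono_succ))
      (fun i j => h _ _)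
    have hpos : ∀ i j, 0 < a i - b j := fun i j => sub_pos.2 (h i j)
    -- the matrix obtained by clearing the first column below the top entry
    let B : Matrix (Fin (n + 1)) (Fin (n + 1)) ℚ := Matrix.of fun i j =>
      (a i - b j)⁻¹ - (if i = 0 then 0 else (a 0 - b 0) / (a i - b 0)) * (a 0 - b j)⁻¹
    have hB : (Matrix.of fun i j => (a i - b j)⁻¹).det = B.det := by
      refine Matrix.det_eq_of_forall_row_eq_smul_add_const
        (fun i => if i = 0 then 0 else (a 0 - b 0) / (a i - b 0)) 0 (by simp) ?_
      intro i j
      simp [B]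
    have hS : B.submatrix Fin.succ Fin.succ = Matrix.of fun i j =>
        ((a 0 - a (Fin.succ i)) / (a (Fin.succ i) - b 0)) *
        (Matrix.of (fun i j => ((b (Fin.succ j) - b 0) / (a 0 - b (Fin.succ j))) *
          (Matrix.of fun (i j : Fin n) => (a i.succ - b j.succ)⁻¹) i j) : Matrix _ _ ℚ) i j := by
      ext i j
      have h1 := (hpos i.succ j.succ).ne'
      have h2 := (hpos i.succ 0).ne'
      have h3 := (hpos 0 j.succ).ne'
      simp only [B, Matrix.submatrix_apply, Matrix.of_apply, Fin.succ_ne_zero, if_false]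
      field_simp
      ring
    rw [hB, Matrix.det_succ_column_zero, Finset.sum_eq_single 0]
    · have h00 : B 0 0 = (a 0 - b 0)⁻¹ := by simp [B]
      simp only [Fin.val_zero, pow_zero, one_mul, h00, Fin.succAbove_zero]
      rw [hS, Matrix.det_mul_column, Matrix.det_mul_row]
      refine mul_pos (inv_pos.2 (hpos 0 0)) (mul_pos ?_ (mul_pos ?_ ih))
      · exact Finset.prod_pos fun i _ =>
          div_pos (sub_pos.2 (ha (Fin.succ_pos i))) (hpos _ _)
      · exact Finset.prod_pos fun i _ =>
          div_pos (sub_pos.2 (hb (Fin.succ_pos i))) (hpos _ _)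
    · intro i _ hi
      have h0 : B i 0 = 0 := by
        have h2 := (hpos i 0).ne'
        have h3 := (hpos 0 0).ne'
        simp only [B, Matrix.of_apply, hi, if_false]
        field_simp
        ring
      simp [h0]
    · simp

/-- When exactly the last corner pair is not active, the signs attached to the two terms of the
Desnanot–Jacobi identity are opposite, which compensates the minus sign there. -/
lemma expectedSign_condensation {n : ℕ} (a b : Fin (n + 2) → ℚ) (h00 : b 0 < a 0)
    (h0n : b (Fin.last _) < a 0) (hn0 : b 0 < a (Fin.last _))
    (hnn : ¬ b (Fin.last _) < a (Fin.last _)) :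
    expectedSign a b * expectedSign (fun i : Fin n => a i.succ.castSucc)
        (fun i => b i.succ.castSucc) =
      expectedSign (fun i => a (Fin.succ i)) (fun i => b (Fin.succ i)) *
        expectedSign (fun i => a (Fin.castSucc i)) (fun i => b (Fin.castSucc i)) ∧
    expectedSign a b * expectedSign (fun i : Fin n => a i.succ.castSucc)
        (fun i => b i.succ.castSucc) =
      -(expectedSign (fun i => a (Fin.succ i)) (fun i => b (Fin.castSucc i)) *
        expectedSign (fun i => a (Fin.castSucc i)) (fun i => b (Fin.succ i))) := by
  -- all products are split into corners, edges and the inner block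
  have hfull : ∀ f : Fin (n + 2) → ℚ,
      ∏ i, f i = f 0 * (∏ i : Fin n, f i.succ.castSucc) * f (Fin.last _) := by
    intro f
    rw [Fin.prod_univ_castSucc, Fin.prod_univ_succ]
    rfl
  have hs : ∀ f : Fin (n + 2) → ℚ,
      ∏ i : Fin (n + 1), f i.succ = (∏ i : Fin n, f i.succ.castSucc) * f (Fin.last _) := by
    intro f
    rw [Fin.prod_univ_castSucc]
    rfl
  have hc : ∀ f : Fin (n + 2) → ℚ,
      ∏ i : Fin (n + 1), f i.castSucc = f 0 * (∏ i : Fin n, f i.succ.castSucc) := by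
    intro f
    rw [Fin.prod_univ_succ]
    rfl
  unfold expectedSign
  rw [hs (fun i => ∏ j : Fin (n + 1), if b j.succ < a i then -1 else 1),
    hc (fun i => ∏ j : Fin (n + 1), if b j.castSucc < a i then -1 else 1),
    hs (fun i => ∏ j : Fin (n + 1), if b j.castSucc < a i then -1 else 1),
    hc (fun i => ∏ j : Fin (n + 1), if b j.succ < a i then -1 else 1)]
  have hs' : ∀ x : ℚ, (∏ j : Fin (n + 1), if b j.succ < x then (-1 : ℚ) else 1) = _ :=
    fun x => hs (fun j => if b j < x then -1 else 1)
  have hc' : ∀ x : ℚ, (∏ j : Fin (n + 1), if b j.castSucc < x then (-1 : ℚ) else 1) = _ :=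
    fun x => hc (fun j => if b j < x then -1 else 1)
  simp only [hs', hc', hfull, Finset.prod_mul_distrib, h00, h0n, hn0, hnn, if_true, if_false]
  constructor <;> ring

/-- The sign of the determinant of a restricted Cauchy matrix. -/
lemma signed_det_pos (n : ℕ) : ∀ (a b : Fin n → ℚ), StrictAnti a → StrictMono b →
    (∀ i : Fin n, b i.rev < a i) → 0 < expectedSign a b * (restrictedCauchy a b).det := by
  induction n using Nat.strong_induction_on with
  | _ n ih =>
  intro a b ha hb hab
  rcases n with _ | n
  · simp [expectedSign]
  by_cases hnn : b (Fin.last n) < a (Fin.last n)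
  · have hall : ∀ i j, b j < a i := fun i j =>
      ((hb.monotone (Fin.le_last j)).trans_lt hnn).trans_le (ha.antitone (Fin.le_last i))
    have h1 : expectedSign a b = 1 := by
      simp only [expectedSign, hall, if_true, Finset.prod_const, Finset.card_univ,
        Fintype.card_fin, ← pow_mul, ← pow_add]
      refine Even.neg_one_pow ?_
      rw [show n + 1 + (n + 1) * (n + 1) = (n + 1) * (n + 1 + 1) by ring]
      exact Nat.even_mul_succ_self (n + 1)
    have h2 : restrictedCauchy a b = Matrix.of fun i j => (a i - b j)⁻¹ := by
      simp [restrictedCauchy, hall]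
    rw [h1, h2, one_mul]
    exact cauchy_det_pos a b ha hb hall
  rcases n with _ | n
  · exact absurd (hab 0) hnn
  have h0n : b (Fin.last _) < a 0 := by simpa using hab 0
  have hn0 : b 0 < a (Fin.last _) := by simpa using hab (Fin.last _)
  have h00 : b 0 < a 0 := (hb.monotone (Fin.zero_le _)).trans_lt h0n
  have hcS := Fin.strictMono_castSucc (n := n + 1)
  have hS := Fin.strictMono_succ (n := n + 1)
  have hin : StrictMono fun i : Fin n => i.succ.castSucc :=
    Fin.strictMono_castSucc.comp Fin.strictMono_succ
  have pinner := ih n (by omega) (fun i => a i.succ.castSucc) (fun i => b i.succ.castSucc)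
    (ha.comp_strictMono hin) (hb.comp hin) (fun i => by
      have := hab i.succ.castSucc
      rwa [Fin.rev_castSucc, Fin.rev_succ, ← Fin.castSucc_succ] at this)
  have pnn := ih (n + 1) (by omega) (fun i => a i.castSucc) (fun i => b i.castSucc)
    (ha.comp_strictMono hcS) (hb.comp hcS) (fun i => by
      have := hab i.castSucc
      rw [Fin.rev_castSucc] at this
      exact (hb (Fin.castSucc_lt_succ)).trans this)
  have p1n := ih (n + 1) (by omega) (fun i => a i.succ) (fun i => b i.castSucc)
    (ha.comp_strictMono hS) (hb.comp hcS) (fun i => by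
      have := hab i.succ
      rwa [Fin.rev_succ] at this)
  have pn1 := ih (n + 1) (by omega) (fun i => a i.castSucc) (fun i => b i.succ)
    (ha.comp_strictMono hcS) (hb.comp hS) (fun i => by
      have := hab i.castSucc
      rwa [Fin.rev_castSucc] at this)
  have p11 : 0 ≤ expectedSign (fun i : Fin (n + 1) => a i.succ) (fun i => b i.succ) *
      (restrictedCauchy (fun i : Fin (n + 1) => a i.succ) (fun i => b i.succ)).det := by
    by_cases hc : ∀ i : Fin (n + 1), b i.rev.succ < a i.succ
    · exact (ih (n + 1) (by omega) (fun i => a i.succ) (fun i => b i.succ)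
        (ha.comp_strictMono hS) (hb.comp hS) hc).le
    · push Not at hc
      obtain ⟨i, hi⟩ := hc
      rw [det_eq_zero_of_antidiag (fun i : Fin (n + 1) => a i.succ) (fun i => b i.succ)
        (ha.comp_strictMono hS) (hb.comp hS) i hi, mul_zero]
  obtain ⟨s1, s2⟩ := expectedSign_condensation a b h00 h0n hn0 hnn
  have dj : (restrictedCauchy a b).det *
      (restrictedCauchy (fun i : Fin n => a i.succ.castSucc) (fun i => b i.succ.castSucc)).det =
      (restrictedCauchy (fun i : Fin (n + 1) => a i.succ) (fun i => b i.succ)).det *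
      (restrictedCauchy (fun i : Fin (n + 1) => a i.castSucc) (fun i => b i.castSucc)).det -
      (restrictedCauchy (fun i : Fin (n + 1) => a i.succ) (fun i => b i.castSucc)).det *
      (restrictedCauchy (fun i : Fin (n + 1) => a i.castSucc) (fun i => b i.succ)).det :=
    desnanot_jacobi (restrictedCauchy a b)
  refine (mul_pos_iff_of_pos_right pinner).1 ?_
  have key := add_pos_of_nonneg_of_pos (mul_nonneg p11 pnn.le) (mul_pos p1n pn1)
  refine key.trans_eq ?_
  generalize (restrictedCauchy a b).det = d at *
  set di := (restrictedCauchy (fun i : Fin n => a i.succ.castSucc)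
    (fun i => b i.succ.castSucc)).det
  set d11 := (restrictedCauchy (fun i : Fin (n + 1) => a i.succ) (fun i => b i.succ)).det
  set dnn := (restrictedCauchy (fun i : Fin (n + 1) => a i.castSucc) (fun i => b i.castSucc)).det
  set d1n := (restrictedCauchy (fun i : Fin (n + 1) => a i.succ) (fun i => b i.castSucc)).det
  set dn1 := (restrictedCauchy (fun i : Fin (n + 1) => a i.castSucc) (fun i => b i.succ)).det
  linear_combination (-(expectedSign a b * expectedSign (fun i : Fin n => a i.succ.castSucc)
        (fun i => b i.succ.castSucc))) * dj - d11 * dnn * s1 + d1n * dn1 * s2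

/-- Any restricted integer Cauchy matrix is nonsingular. -/
theorem stmt14 (n : ℕ) (a b : Fin n → ℤ)
    (ha : StrictAnti a) (hb : StrictMono b)
    (hab : ∀ i : Fin n, b i.rev < a i)
    (hne : ∀ i j : Fin n, a i ≠ b j) :
    (Matrix.of fun i j : Fin n =>
      if b j < a i then ((a i : ℚ) - (b j : ℚ))⁻¹ else 0).det ≠ 0 := by
  have h := signed_det_pos n (fun i => (a i : ℚ)) (fun i => (b i : ℚ))
    (fun i j hij => Int.cast_lt.2 (ha hij)) (fun i j hij => Int.cast_lt.2 (hb hij))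
    (fun i => Int.cast_lt.2 (hab i))
  have h2 := right_ne_zero_of_mul h.ne'
  simpa only [restrictedCauchy, Int.cast_lt] using h2
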